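/- arXiv:1803.08386 — 2 statements merged into one kernel-verified Lean document; each statement's English description precedes it below -/
import Mathlib

section
/- One has lim_{t→t0⁺} det Ψ(t) / (t − t0)^{n²} = (∏_{j=1}^{n} E_j²) · det H_n, where H_n is the n×n Hilbert-type matrix with entries (H_n)_{ij} = 1/(i + j − 1). -/
open MeasureTheory Matrix Set Filter Topology

noncomputable section

/-- `c(s)_j = ε_j(s) (s - t0)^(j-1)` (1-based), i.e. exponent `(j : ℕ)` with 0-based `Fin n`. -/
def cvec (n : ℕ) (t0 : ℝ) (ε : Fin n → ℝ → ℝ) (s : ℝ) : Fin n → ℝ :=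
  fun j => ε j s * (s - t0) ^ (j : ℕ)

/-- `Ψ(t) = ∫_{t0}^t c(s) c(s)ᵀ ds` (entrywise integral). -/
def PsiE (n : ℕ) (t0 : ℝ) (ε : Fin n → ℝ → ℝ) (t : ℝ) : Matrix (Fin n) (Fin n) ℝ :=
  fun i j => ∫ s in t0..t, cvec n t0 ε s i * cvec n t0 ε s j

/-- The `ε_j` are measurable and bounded on `(t0, τ]` with limit `E_j` as `s → t0⁺`. -/
def ERegular (n : ℕ) (t0 τ : ℝ) (ε : Fin n → ℝ → ℝ) (E : Fin n → ℝ) : Prop :=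
  (∀ j, Measurable (ε j)) ∧
  (∀ j, ∃ M : ℝ, ∀ s ∈ Set.Ioc t0 τ, |ε j s| ≤ M) ∧
  (∀ j, Filter.Tendsto (ε j) (nhdsWithin t0 (Set.Ioi t0)) (nhds (E j)))

/-!
If `g s → L` as `s → a⁺`, then so do its averages over `(a, t]` against a positive weight. For the
weight `(s - a) ^ r` this reads `∫ₐᵗ (s - a) ^ r g(s) ds ~ L (t - a) ^ (r + 1) / (r + 1)`. With
`r = p i + q j` it gives the leading term of every entry of the matrix, whose power of `t - a`
factors as `(t - a) ^ p i * (t - a) ^ (q j + 1)`. Hence the powers can be pulled out of the rows and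
columns of the determinant, and continuity of the determinant gives the limit.
-/

section WeightedAverage

variable {V W : Type*} [NormedAddCommGroup V] [NormedAddCommGroup W] {a b : ℝ} {L : V}

lemma eventually_intervalIntegrable_of_isBigO {f : ℝ → V} {w : ℝ → W} (hab : a < b)
    (hfm : AEStronglyMeasurable f (volume.restrict (Ioc a b)))
    (hw : IntervalIntegrable w volume a b) (hf : f =O[𝓝[>] a] w) :
    ∀ᶠ t in 𝓝[>] a, IntervalIntegrable f volume a t := by
  have hIoc : Ioc a b ∈ 𝓝[>] a := Ioc_mem_nhdsGT hab
  obtain ⟨U, hU, hfU⟩ := hf.integrableAtFilter ⟨_, hIoc, hfm⟩ ⟨_, hIoc, hw.1⟩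
  obtain ⟨u, hau, hu⟩ := mem_nhdsGT_iff_exists_Ioc_subset.1 hU
  filter_upwards [Ioc_mem_nhdsGT hau] with t ht
  exact (intervalIntegrable_iff_integrableOn_Ioc_of_le ht.1.le).2
    (hfU.mono_set ((Ioc_subset_Ioc_right ht.2).trans hu))

variable [NormedSpace ℝ V]

lemma isLittleO_intervalIntegral_norm {f : ℝ → V} {w : ℝ → W} (hab : a < b)
    (hw : IntervalIntegrable w volume a b) (hf : f =o[𝓝[>] a] w) :
    (fun t => ∫ s in a..t, f s) =o[𝓝[>] a] fun t => ∫ s in a..t, ‖w s‖ := by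
  refine Asymptotics.isLittleO_iff.2 fun c hc => ?_
  obtain ⟨u, hau, hu⟩ := mem_nhdsGT_iff_exists_Ioc_subset.1 (hf.def hc)
  filter_upwards [Ioc_mem_nhdsGT hab, Ioc_mem_nhdsGT hau] with t htb htu
  have hwt : IntervalIntegrable w volume a t :=
    hw.mono_set (uIcc_subset_uIcc_left (Icc_subset_uIcc (Ioc_subset_Icc_self htb)))
  calc ‖∫ s in a..t, f s‖
      ≤ ∫ s in a..t, c * ‖w s‖ :=
        intervalIntegral.norm_integral_le_of_norm_le htb.1.le
          (ae_of_all _ fun s hs => hu ⟨hs.1, hs.2.trans htu.2⟩) (hwt.norm.const_mul c)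
    _ = c * ∫ s in a..t, ‖w s‖ := intervalIntegral.integral_const_mul c _
    _ ≤ c * ‖∫ s in a..t, ‖w s‖‖ := by gcongr; exact le_abs_self _

lemma tendsto_inv_integral_smul_integral_smul [CompleteSpace V] {w : ℝ → ℝ} {g : ℝ → V}
    (hab : a < b) (hw : IntervalIntegrable w volume a b) (hwpos : ∀ s ∈ Ioo a b, 0 < w s)
    (hgm : AEStronglyMeasurable g (volume.restrict (Ioc a b)))
    (hg : Tendsto g (𝓝[>] a) (𝓝 L)) :
    Tendsto (fun t => (∫ s in a..t, w s)⁻¹ • ∫ s in a..t, w s • g s) (𝓝[>] a) (𝓝 L) := by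
  have hsub : (fun s => w s • (g s - L)) =o[𝓝[>] a] w := by
    simpa using (Asymptotics.isBigO_refl w _).smul_isLittleO
      ((Asymptotics.isLittleO_one_iff ℝ).2 (tendsto_sub_nhds_zero_iff.2 hg))
  have hint : ∀ᶠ t in 𝓝[>] a, IntervalIntegrable (fun s => w s • (g s - L)) volume a t :=
    eventually_intervalIntegrable_of_isBigO hab
      (hw.1.aestronglyMeasurable.smul (hgm.sub aestronglyMeasurable_const)) hw hsub.isBigO
  have hlim := (isLittleO_intervalIntegral_norm hab hw hsub).tendsto_inv_smul_nhds_zero.add_const L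
  rw [zero_add] at hlim
  refine hlim.congr' ?_
  filter_upwards [hint, Ioo_mem_nhdsGT hab] with t hintt ht
  have hwt : IntervalIntegrable w volume a t :=
    hw.mono_set (uIcc_subset_uIcc_left (Icc_subset_uIcc (Ioo_subset_Icc_self ht)))
  have hwpost : ∀ s ∈ Ioo a t, 0 < w s := fun s hs => hwpos s ⟨hs.1, hs.2.trans ht.2⟩
  have hpos : 0 < ∫ s in a..t, w s :=
    intervalIntegral.intervalIntegral_pos_of_pos_on hwt hwpost ht.1
  have hnorm : ∫ s in a..t, ‖w s‖ = ∫ s in a..t, w s :=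
    intervalIntegral.integral_congr_Ioo_of_le ht.1.le fun s hs =>
      Real.norm_of_nonneg (hwpost s hs).le
  have hsplit : ∫ s in a..t, w s • g s
      = (∫ s in a..t, w s • (g s - L)) + (∫ s in a..t, w s) • L := by
    rw [← intervalIntegral.integral_smul_const,
      ← intervalIntegral.integral_add hintt (hwt.smul_continuousOn continuousOn_const)]
    simp only [← smul_add, sub_add_cancel]
  rw [hnorm, hsplit, smul_add, inv_smul_smul₀ hpos.ne']

lemma intervalIntegrable_sub_rpow {r : ℝ} (hr : -1 < r) :
    IntervalIntegrable (fun s => (s - a) ^ r) volume a b := by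
  simpa using (intervalIntegral.intervalIntegrable_rpow' (a := 0) (b := b - a) hr).comp_sub_right a

lemma integral_sub_rpow {r : ℝ} (hr : -1 < r) :
    ∫ s in a..b, (s - a) ^ r = (b - a) ^ (r + 1) / (r + 1) := by
  rw [intervalIntegral.integral_comp_sub_right (fun x => x ^ r), sub_self,
    integral_rpow (Or.inl hr), Real.zero_rpow (by linarith), sub_zero]

lemma tendsto_inv_rpow_smul_integral_rpow_smul [CompleteSpace V] {r : ℝ} {g : ℝ → V}
    (hr : -1 < r) (hab : a < b) (hgm : AEStronglyMeasurable g (volume.restrict (Ioc a b)))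
    (hg : Tendsto g (𝓝[>] a) (𝓝 L)) :
    Tendsto (fun t => ((t - a) ^ (r + 1))⁻¹ • ∫ s in a..t, (s - a) ^ r • g s) (𝓝[>] a)
      (𝓝 ((r + 1)⁻¹ • L)) := by
  have hmean := (tendsto_inv_integral_smul_integral_smul hab (intervalIntegrable_sub_rpow hr)
    (fun s hs => Real.rpow_pos_of_pos (sub_pos.2 hs.1) r) hgm hg).const_smul (r + 1)⁻¹
  refine hmean.congr fun t => ?_
  have hr' : r + 1 ≠ 0 := by linarith
  rw [integral_sub_rpow hr, smul_smul]
  congr 1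
  field_simp

end WeightedAverage

section Determinant

variable {ι R A : Type*} [Fintype ι] [DecidableEq ι] [CommRing R] [CommRing A] [Algebra R A]

lemma det_of_mul_smul (u v : ι → R) (M : Matrix ι ι A) :
    (of fun i j => (u i * v j) • M i j).det = ((∏ i, u i) * ∏ j, v j) • M.det := by
  have hrow := det_mul_row (fun j => algebraMap R A (v j)) M
  have hcol := det_mul_column (fun i => algebraMap R A (u i))
    (of fun i j => algebraMap R A (v j) * M i j)
  rw [hrow] at hcol
  simpa only [of_apply, ← map_prod, ← Algebra.smul_def, smul_smul] using hcol

lemma det_of_smul_mul (C : Matrix ι ι R) (x y : ι → A) :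
    (of fun i j => C i j • (x i * y j)).det = C.det • ((∏ i, x i) * ∏ j, y j) := by
  have hmul := det_of_mul_smul x y (C.map (algebraMap R A))
  rw [← RingHom.mapMatrix_apply, ← RingHom.map_det, smul_eq_mul, mul_comm,
    ← Algebra.smul_def] at hmul
  rw [← hmul]
  congr 1
  ext i j
  simp [Algebra.smul_def, mul_comm]

lemma det_of_inv_rpow_add_smul [Algebra ℝ A] {h : ℝ} (hh : 0 < h) (p q : ι → ℝ)
    (M : Matrix ι ι A) :
    (of fun i j => (h ^ (p i + q j))⁻¹ • M i j).det = (h ^ ∑ i, (p i + q i))⁻¹ • M.det := by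
  simp only [Real.rpow_add hh, mul_inv, det_of_mul_smul, Finset.prod_inv_distrib,
    Finset.sum_add_distrib, Real.rpow_sum_of_pos hh]

end Determinant

lemma integral_rpow_smul_mul_rpow_smul {A : Type*} [NormedRing A] [NormedAlgebra ℝ A]
    {a t : ℝ} (hat : a ≤ t) (p q : ℝ) (f g : ℝ → A) :
    ∫ s in a..t, ((s - a) ^ p • f s) * ((s - a) ^ q • g s)
      = ∫ s in a..t, (s - a) ^ (p + q) • (f s * g s) :=
  intervalIntegral.integral_congr_Ioo_of_le hat fun s hs => by
    simp only [smul_mul_smul_comm, Real.rpow_add (sub_pos.2 hs.1)]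

theorem stmt13_general {ι A : Type*} [Fintype ι] [DecidableEq ι]
    [NormedCommRing A] [NormedAlgebra ℝ A] [CompleteSpace A] {a b : ℝ} (hab : a < b)
    {p q : ι → ℝ} (hpq : ∀ i j, -1 < p i + q j) {f g : ι → ℝ → A} {F G : ι → A}
    (hfm : ∀ i, AEStronglyMeasurable (f i) (volume.restrict (Ioc a b)))
    (hgm : ∀ j, AEStronglyMeasurable (g j) (volume.restrict (Ioc a b)))
    (hf : ∀ i, Tendsto (f i) (𝓝[>] a) (𝓝 (F i))) (hg : ∀ j, Tendsto (g j) (𝓝[>] a) (𝓝 (G j))) :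
    Tendsto
      (fun t => ((t - a) ^ ∑ i, (p i + q i + 1))⁻¹ •
        (of fun i j => ∫ s in a..t, ((s - a) ^ p i • f i s) * ((s - a) ^ q j • g j s)).det)
      (𝓝[>] a)
      (𝓝 ((of fun i j => (p i + q j + 1)⁻¹).det • ((∏ i, F i) * ∏ j, G j))) := by
  have hentry (i j : ι) :
      Tendsto
        (fun t => ((t - a) ^ (p i + q j + 1))⁻¹ •
          ∫ s in a..t, (s - a) ^ (p i + q j) • (f i s * g j s))
        (𝓝[>] a) (𝓝 ((p i + q j + 1)⁻¹ • (F i * G j))) :=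
    tendsto_inv_rpow_smul_integral_rpow_smul (hpq i j) hab ((hfm i).mul (hgm j))
      ((hf i).mul (hg j))
  have hdet := (continuous_id.matrix_det.tendsto _).comp
    (tendsto_pi_nhds.2 fun i => tendsto_pi_nhds.2 (hentry i))
  rw [← det_of_smul_mul]
  refine hdet.congr' ?_
  filter_upwards [self_mem_nhdsWithin] with t ht
  simp only [add_assoc]
  rw [← det_of_inv_rpow_add_smul (sub_pos.2 ht)]
  refine congrArg det (Matrix.ext fun i j => ?_)
  simp only [of_apply, integral_rpow_smul_mul_rpow_smul (le_of_lt ht)]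
  rfl

lemma sum_fin_val_add_val_add_one (n : ℕ) : ∑ i : Fin n, ((i : ℕ) + i + 1) = n ^ 2 := by
  induction n with
  | zero => rfl
  | succ n ih =>
    simp only [Fin.sum_univ_castSucc, Fin.val_castSucc, Fin.val_last, ih]
    ring

lemma rpow_sum_fin_val_add_val_add_one (x : ℝ) (n : ℕ) :
    x ^ ∑ i : Fin n, ((i : ℝ) + i + 1) = x ^ n ^ 2 := by
  rw [← sum_fin_val_add_val_add_one, ← Real.rpow_natCast]
  push_cast
  rfl

lemma PsiE_eq_integral_rpow_smul (n : ℕ) (t0 : ℝ) (ε : Fin n → ℝ → ℝ) (t : ℝ) :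
    PsiE n t0 ε t = of fun i j : Fin n =>
      ∫ s in t0..t, ((s - t0) ^ (i : ℝ) • ε i s) * ((s - t0) ^ (j : ℝ) • ε j s) := by
  ext i j
  simp only [PsiE, cvec, of_apply, Real.rpow_natCast, smul_eq_mul, mul_comm]

theorem stmt13 (n : ℕ) (hn : 1 ≤ n) (t0 τ : ℝ) (ht : t0 < τ)
    (ε : Fin n → ℝ → ℝ) (E : Fin n → ℝ) (hreg : ERegular n t0 τ ε E) :
    Filter.Tendsto (fun t => (PsiE n t0 ε t).det / (t - t0) ^ (n ^ 2))
      (nhdsWithin t0 (Set.Ioi t0))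
      (nhds ((∏ j : Fin n, (E j) ^ 2) *
        Matrix.det (Matrix.of fun i j : Fin n =>
          (1 : ℝ) / (((i : ℕ) + (j : ℕ) + 1 : ℕ) : ℝ)))) := by
  obtain ⟨hmeas, -, hlim⟩ := hreg
  have hεm (j : Fin n) : AEStronglyMeasurable (ε j) (volume.restrict (Ioc t0 τ)) :=
    (hmeas j).aestronglyMeasurable
  have hpos (i j : Fin n) : (-1 : ℝ) < (i : ℕ) + (j : ℕ) := neg_one_lt_zero.trans_le (by positivity)
  simpa [PsiE_eq_integral_rpow_smul, rpow_sum_fin_val_add_val_add_one, div_eq_inv_mul, mul_comm,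
    Finset.prod_pow, ← sq] using stmt13_general ht hpos hεm hεm hlim hlim
end
end

section
/- Assume E_j ≠ 0 for every j = 1, …, n. Then there exist τ' ∈ (t0, τ] and a constant K > 0 such that for every t ∈ (t0, τ'] the matrix Ψ(t) is invertible and its inverse satisfies the entrywise bounds |(Ψ(t)⁻¹)_{ij}| ≤ K (t − t0)^{1−i−j} for all 1 ≤ i, j ≤ n. -/
open MeasureTheory Matrix Set Filter Topology

noncomputable section

/-!
Rescaling turns `Ψ(t)` into a matrix with an invertible limit. If `c_i(s) ∼ E_i (s - t₀) ^ a_i` then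
`∫_{t₀}^t c_i c_j ∼ E_i E_j (t - t₀) ^ (a_i + a_j + 1) / (a_i + a_j + 1)`. Hence `Ψ = D H D` with
`D = diag ((t - t₀) ^ (a_i + 1/2))` and `H` converging to the Cauchy matrix `1 / (a_i + a_j + 1)`
scaled by the nonzero `E_i`. Cauchy matrices with distinct nodes are nonsingular, so `H⁻¹` stays
bounded, and `Ψ⁻¹ = D⁻¹ H⁻¹ D⁻¹`.
-/

section CauchyMatrix

variable {m n F : Type*} [Field F]

/-- The Cauchy matrix `1 / (x_i - y_j)` with row nodes `x` and column nodes `y`. -/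
def cauchyMatrix (x : m → F) (y : n → F) : Matrix m n F :=
  Matrix.of fun i j => (x i - y j)⁻¹

variable [Fintype n] [DecidableEq n]

-- A kernel vector `v` gives partial fractions `∑ v_j / (X - y_j)` vanishing at every `x_i`; the
-- numerator has degree less than the number of its roots, so it is zero.
theorem det_cauchyMatrix_ne_zero {x y : n → F} (hx : Function.Injective x)
    (hy : Function.Injective y) (hxy : ∀ i j, x i ≠ y j) : (cauchyMatrix x y).det ≠ 0 := by
  intro hdet
  obtain ⟨v, hv, hker⟩ := Matrix.exists_mulVec_eq_zero_iff.mpr hdet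
  have hweight (j : n) : Lagrange.nodalWeight Finset.univ y j ≠ 0 :=
    Lagrange.nodalWeight_ne_zero hy.injOn (Finset.mem_univ j)
  let r : n → F := fun j => v j / Lagrange.nodalWeight Finset.univ y j
  let p : Polynomial F := Lagrange.interpolate Finset.univ y r
  have hroot (i : n) : p.eval (x i) = 0 := by
    have hsum : ∑ j, Lagrange.nodalWeight Finset.univ y j * (x i - y j)⁻¹ * r j
        = (cauchyMatrix x y *ᵥ v) i := by
      refine Finset.sum_congr rfl fun j _ => ?_
      simp only [cauchyMatrix, Matrix.of_apply, r]
      field_simp [hweight j]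
    rw [Lagrange.eval_interpolate_not_at_node r fun j _ => hxy i j, hsum, hker, Pi.zero_apply,
      mul_zero]
  have hp : p = 0 :=
    Polynomial.eq_zero_of_degree_lt_of_eval_index_eq_zero _ hx.injOn
      (Lagrange.degree_interpolate_lt r hy.injOn) fun i _ => hroot i
  refine hv (funext fun j => ?_)
  have hr : r j = 0 := by
    rw [← Lagrange.eval_interpolate_at_node r hy.injOn (Finset.mem_univ j)]
    exact (congrArg (Polynomial.eval (y j)) hp).trans Polynomial.eval_zero
  exact (div_eq_zero_iff.mp hr).resolve_right (hweight j)

end CauchyMatrix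

section InverseBounds

variable {α ι 𝕜 : Type*} [Fintype ι] [DecidableEq ι] [NormedField 𝕜] {l : Filter α}

theorem inv_diagonal_mul_mul_diagonal_apply {F : Type*} [Field F] {r c : ι → F}
    (hr : ∀ i, r i ≠ 0) (hc : ∀ i, c i ≠ 0) (H : Matrix ι ι F) (i j : ι) :
    (diagonal r * H * diagonal c)⁻¹ i j = H⁻¹ i j / (c i * r j) := by
  have inv_diagonal {d : ι → F} (hd : ∀ i, d i ≠ 0) : (diagonal d)⁻¹ = diagonal fun i => (d i)⁻¹ :=
    Matrix.inv_eq_right_inv (by simp [hd])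
  rw [Matrix.mul_inv_rev, Matrix.mul_inv_rev, inv_diagonal hr, inv_diagonal hc, diagonal_mul,
    mul_diagonal]
  ring

open scoped Matrix.Norms.Elementwise in
theorem exists_eventually_isUnit_and_norm_inv_apply_le {H : α → Matrix ι ι 𝕜} {A : Matrix ι ι 𝕜}
    (hA : A.det ≠ 0) (hH : Tendsto H l (𝓝 A)) :
    ∃ K > (0 : ℝ), ∀ᶠ t in l, IsUnit (H t) ∧ ∀ i j, ‖(H t)⁻¹ i j‖ ≤ K := by
  have hdet : Tendsto (fun t => (H t).det) l (𝓝 A.det) :=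
    (continuous_id.matrix_det.tendsto A).comp hH
  have hinv : Tendsto (fun t => (H t)⁻¹) l (𝓝 A⁻¹) := by
    refine (continuousAt_matrix_inv A ?_).tendsto.comp hH
    rw [Ring.inverse_eq_inv']
    exact continuousAt_inv₀ hA
  refine ⟨‖A⁻¹‖ + 1, by positivity, ?_⟩
  filter_upwards [hdet.eventually_ne hA, hinv.norm.eventually_lt_const (lt_add_one ‖A⁻¹‖)]
    with t hunit hbound
  exact ⟨(Matrix.isUnit_iff_isUnit_det _).mpr hunit.isUnit,
    fun i j => (Matrix.norm_entry_le_entrywise_sup_norm _).trans hbound.le⟩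

theorem exists_eventually_isUnit_and_norm_inv_apply_le_div {M : α → Matrix ι ι 𝕜}
    {r c : α → ι → 𝕜} {A : Matrix ι ι 𝕜} (hr : ∀ᶠ t in l, ∀ i, r t i ≠ 0)
    (hc : ∀ᶠ t in l, ∀ i, c t i ≠ 0) (hA : A.det ≠ 0)
    (hM : ∀ i j, Tendsto (fun t => M t i j / (r t i * c t j)) l (𝓝 (A i j))) :
    ∃ K > (0 : ℝ), ∀ᶠ t in l,
      IsUnit (M t) ∧ ∀ i j, ‖(M t)⁻¹ i j‖ ≤ K / ‖c t i * r t j‖ := by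
  let H : α → Matrix ι ι 𝕜 := fun t => Matrix.of fun i j => M t i j / (r t i * c t j)
  have hH : Tendsto H l (𝓝 A) := tendsto_pi_nhds.mpr fun i => tendsto_pi_nhds.mpr (hM i)
  obtain ⟨K, hK, hbound⟩ := exists_eventually_isUnit_and_norm_inv_apply_le hA hH
  refine ⟨K, hK, ?_⟩
  filter_upwards [hr, hc, hbound] with t hrt hct ⟨hunit, hle⟩
  have hfactor : M t = diagonal (r t) * H t * diagonal (c t) := by
    ext i j
    have hri := hrt i
    have hcj := hct j
    simp only [H, mul_diagonal, diagonal_mul, Matrix.of_apply]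
    field_simp
  rw [hfactor]
  refine ⟨((isUnit_diagonal.mpr (Pi.isUnit_iff.mpr fun i => (hrt i).isUnit)).mul hunit).mul
    (isUnit_diagonal.mpr (Pi.isUnit_iff.mpr fun i => (hct i).isUnit)), fun i j => ?_⟩
  rw [inv_diagonal_mul_mul_diagonal_apply hrt hct, norm_div]
  gcongr
  exact hle i j

end InverseBounds

section IntegralAsymptotics

theorem eventually_forall_mem_Ioc_of_eventually_nhdsGT {X : Type*} [TopologicalSpace X]
    [LinearOrder X] [OrderTopology X] [NoMaxOrder X] [DenselyOrdered X] {a : X} {P : X → Prop}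
    (h : ∀ᶠ s in 𝓝[>] a, P s) : ∀ᶠ t in 𝓝[>] a, ∀ s ∈ Ioc a t, P s := by
  obtain ⟨u, hu, hsub⟩ := mem_nhdsGT_iff_exists_Ioc_subset.mp h
  filter_upwards [Ioc_mem_nhdsGT hu] with t ht s hs
  exact hsub ⟨hs.1, hs.2.trans ht.2⟩

theorem stronglyMeasurableAtFilter_mul {X R : Type*} [MeasurableSpace X] {μ : Measure X}
    {l : Filter X} [TopologicalSpace R] [Mul R] [ContinuousMul R] {f g : X → R}
    (hf : StronglyMeasurableAtFilter f l μ) (hg : StronglyMeasurableAtFilter g l μ) :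
    StronglyMeasurableAtFilter (fun x => f x * g x) l μ := by
  obtain ⟨s, hs, hfs, hgs⟩ := (hf.eventually.and hg.eventually).exists_mem_of_smallSets
  exact ⟨s, hs, hfs.mul hgs⟩

variable {E : Type*} [NormedAddCommGroup E] {a : ℝ}

theorem eventually_intervalIntegrable_of_integrableAtFilter_nhdsGT {f : ℝ → E}
    (hf : IntegrableAtFilter f (𝓝[>] a)) : ∀ᶠ t in 𝓝[>] a, IntervalIntegrable f volume a t := by
  obtain ⟨s, hs, hfs⟩ := hf
  filter_upwards [eventually_forall_mem_Ioc_of_eventually_nhdsGT hs, self_mem_nhdsWithin]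
    with t hts hat
  exact (intervalIntegrable_iff_integrableOn_Ioc_of_le (mem_Ioi.mp hat).le).mpr (hfs.mono_set hts)

theorem isLittleO_intervalIntegral_nhdsGT [NormedSpace ℝ E] {f : ℝ → E} {w : ℝ → ℝ}
    (hw : ∀ᶠ s in 𝓝[>] a, 0 ≤ w s) (hwi : IntegrableAtFilter w (𝓝[>] a))
    (hf : f =o[𝓝[>] a] w) :
    (fun t => ∫ s in a..t, f s) =o[𝓝[>] a] fun t => ∫ s in a..t, w s := by
  refine Asymptotics.isLittleO_iff.mpr fun δ hδ => ?_
  have hle : ∀ᶠ s in 𝓝[>] a, ‖f s‖ ≤ δ * w s := by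
    filter_upwards [Asymptotics.isLittleO_iff.mp hf hδ, hw] with s hfs hws
    rwa [Real.norm_of_nonneg hws] at hfs
  filter_upwards [eventually_forall_mem_Ioc_of_eventually_nhdsGT hle, self_mem_nhdsWithin,
    eventually_intervalIntegrable_of_integrableAtFilter_nhdsGT hwi] with t hlet hat hwt
  calc ‖∫ s in a..t, f s‖
      ≤ ∫ s in a..t, δ * w s :=
        intervalIntegral.norm_integral_le_of_norm_le (mem_Ioi.mp hat).le
          (Eventually.of_forall hlet) (hwt.const_mul δ)
    _ = δ * ∫ s in a..t, w s := intervalIntegral.integral_const_mul δ w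
    _ ≤ δ * ‖∫ s in a..t, w s‖ := by
        gcongr
        exact Real.le_norm_self _

variable {f w : ℝ → ℝ} {L : ℝ}

theorem tendsto_integral_div_integral_nhdsGT (hw : ∀ᶠ s in 𝓝[>] a, 0 < w s)
    (hwi : IntegrableAtFilter w (𝓝[>] a)) (hfm : StronglyMeasurableAtFilter f (𝓝[>] a))
    (hfw : Tendsto (fun s => f s / w s) (𝓝[>] a) (𝓝 L)) :
    Tendsto (fun t => (∫ s in a..t, f s) / ∫ s in a..t, w s) (𝓝[>] a) (𝓝 L) := by
  have hfO : f =O[𝓝[>] a] w :=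
    Asymptotics.isBigO_of_div_tendsto_nhds (hw.mono fun s hs h => absurd h hs.ne') L hfw
  have hremainder : (fun s => f s - L * w s) =o[𝓝[>] a] w := by
    refine (Asymptotics.isLittleO_iff_tendsto' (hw.mono fun s hs h => absurd h hs.ne')).mpr ?_
    refine (tendsto_sub_nhds_zero_iff.mpr hfw).congr' (hw.mono fun s hs => ?_)
    field_simp
  have hquot := (isLittleO_intervalIntegral_nhdsGT (hw.mono fun _ => le_of_lt) hwi
    hremainder).tendsto_div_nhds_zero
  refine tendsto_sub_nhds_zero_iff.mp (hquot.congr' ?_)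
  filter_upwards [eventually_forall_mem_Ioc_of_eventually_nhdsGT hw, self_mem_nhdsWithin,
    eventually_intervalIntegrable_of_integrableAtFilter_nhdsGT hwi,
    eventually_intervalIntegrable_of_integrableAtFilter_nhdsGT (hfO.integrableAtFilter hfm hwi)]
    with t hwpos hat hwt hft
  have hpos : 0 < ∫ s in a..t, w s :=
    intervalIntegral.intervalIntegral_pos_of_pos_on hwt
      (fun s hs => hwpos s (Ioo_subset_Ioc_self hs)) hat
  rw [intervalIntegral.integral_sub hft (hwt.const_mul L), intervalIntegral.integral_const_mul]
  field_simp

theorem tendsto_integral_div_rpow_nhdsGT {p : ℝ} (hp : -1 < p)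
    (hfm : StronglyMeasurableAtFilter f (𝓝[>] a))
    (hf : Tendsto (fun s => f s / (s - a) ^ p) (𝓝[>] a) (𝓝 L)) :
    Tendsto (fun t => (∫ s in a..t, f s) / (t - a) ^ (p + 1)) (𝓝[>] a) (𝓝 (L / (p + 1))) := by
  have hpos : ∀ᶠ s in 𝓝[>] a, 0 < (s - a) ^ p :=
    eventually_mem_nhdsWithin.mono fun s hs => Real.rpow_pos_of_pos (sub_pos.mpr hs) p
  have hwi : IntegrableAtFilter (fun s => (s - a) ^ p) (𝓝[>] a) := by
    refine ⟨Ioc a (a + 1), Ioc_mem_nhdsGT (lt_add_one a), ?_⟩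
    have hshift := (intervalIntegral.intervalIntegrable_rpow' hp (a := 0) (b := 1)).comp_sub_right a
    rw [zero_add, add_comm] at hshift
    exact (intervalIntegrable_iff_integrableOn_Ioc_of_le (lt_add_one a).le).mp hshift
  have hweight (t : ℝ) : ∫ s in a..t, (s - a) ^ p = (t - a) ^ (p + 1) / (p + 1) := by
    rw [intervalIntegral.integral_comp_sub_right (fun x => x ^ p), integral_rpow (.inl hp),
      sub_self, Real.zero_rpow (by linarith), sub_zero]
  refine ((tendsto_integral_div_integral_nhdsGT hpos hwi hfm hf).div_const (p + 1)).congr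
    fun t => ?_
  rw [hweight, div_div, div_mul_cancel₀ _ (by linarith)]

end IntegralAsymptotics

section Gram

variable {ι : Type*}

/-- The Gram matrix `∫ c cᵀ` over `(a, b)` of a finite family of real functions. An entry whose
integrand is not integrable is `0`. -/
def intervalGram (c : ι → ℝ → ℝ) (a b : ℝ) : Matrix ι ι ℝ :=
  Matrix.of fun i j => ∫ s in a..b, c i s * c j s

theorem tendsto_intervalGram_div_rpow {c : ι → ℝ → ℝ} {t0 : ℝ} {a E : ι → ℝ} {i j : ι}
    (ha : -1 < a i + a j) (hcm : ∀ i, StronglyMeasurableAtFilter (c i) (𝓝[>] t0))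
    (hc : ∀ i, Tendsto (fun s => c i s / (s - t0) ^ a i) (𝓝[>] t0) (𝓝 (E i))) :
    Tendsto (fun t => intervalGram c t0 t i j / (t - t0) ^ (a i + a j + 1)) (𝓝[>] t0)
      (𝓝 (E i * E j / (a i + a j + 1))) := by
  refine tendsto_integral_div_rpow_nhdsGT ha (stronglyMeasurableAtFilter_mul (hcm i) (hcm j))
    (((hc i).mul (hc j)).congr' ?_)
  filter_upwards [self_mem_nhdsWithin] with s hs
  rw [div_mul_div_comm, Real.rpow_add (sub_pos.mpr hs)]

variable [Fintype ι] [DecidableEq ι]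

theorem det_mul_div_add_add_one_ne_zero {a E : ι → ℝ} (hainj : Function.Injective a)
    (ha : ∀ i, -1 / 2 < a i) (hE : ∀ i, E i ≠ 0) :
    (Matrix.of fun i j => E i * E j / (a i + a j + 1)).det ≠ 0 := by
  have hfactor : (Matrix.of fun i j => E i * E j / (a i + a j + 1))
      = diagonal E * cauchyMatrix a (fun j => -(a j + 1)) * diagonal E := by
    ext i j
    simp only [cauchyMatrix, mul_diagonal, diagonal_mul, Matrix.of_apply, sub_neg_eq_add,
      ← add_assoc]
    ring
  have hdiag : (diagonal E).det ≠ 0 := by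
    rw [det_diagonal]
    exact Finset.prod_ne_zero_iff.mpr fun i _ => hE i
  have hcauchy : (cauchyMatrix a fun j => -(a j + 1)).det ≠ 0 :=
    det_cauchyMatrix_ne_zero hainj (fun i j hij => hainj (by simpa using hij))
      fun i j => by linarith [ha i, ha j]
  rw [hfactor, det_mul, det_mul]
  exact mul_ne_zero (mul_ne_zero hdiag hcauchy) hdiag

theorem stmt14_general {c : ι → ℝ → ℝ} {t0 τ : ℝ} (ht : t0 < τ) {a E : ι → ℝ}
    (hainj : Function.Injective a) (ha : ∀ i, -1 / 2 < a i) (hE : ∀ i, E i ≠ 0)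
    (hcm : ∀ i, StronglyMeasurableAtFilter (c i) (𝓝[>] t0))
    (hc : ∀ i, Tendsto (fun s => c i s / (s - t0) ^ a i) (𝓝[>] t0) (𝓝 (E i))) :
    ∃ τ' ∈ Ioc t0 τ, ∃ K > (0 : ℝ), ∀ t ∈ Ioc t0 τ',
      IsUnit (intervalGram c t0 t) ∧
      ∀ i j, |(intervalGram c t0 t)⁻¹ i j| ≤ K * ((t - t0) ^ (a i + a j + 1))⁻¹ := by
  let d : ℝ → ι → ℝ := fun t i => (t - t0) ^ (a i + 1 / 2)
  have hdpos {t : ℝ} (htt : t0 < t) (i : ι) : 0 < d t i := Real.rpow_pos_of_pos (sub_pos.mpr htt) _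
  have hdd {t : ℝ} (htt : t0 < t) (i j : ι) : d t i * d t j = (t - t0) ^ (a i + a j + 1) := by
    rw [← Real.rpow_add (sub_pos.mpr htt)]
    ring_nf
  have hd : ∀ᶠ t in 𝓝[>] t0, ∀ i, d t i ≠ 0 :=
    eventually_mem_nhdsWithin.mono fun t htt i => (hdpos htt i).ne'
  have hlim (i j : ι) : Tendsto (fun t => intervalGram c t0 t i j / (d t i * d t j)) (𝓝[>] t0)
      (𝓝 (E i * E j / (a i + a j + 1))) :=
    (tendsto_intervalGram_div_rpow (by linarith [ha i, ha j]) hcm hc).congr'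
      (eventually_mem_nhdsWithin.mono fun t htt => by simp only [hdd htt])
  obtain ⟨K, hK, hbound⟩ := exists_eventually_isUnit_and_norm_inv_apply_le_div hd hd
    (det_mul_div_add_add_one_ne_zero hainj ha hE) hlim
  obtain ⟨τ', hτ', hmem⟩ :=
    ((eventually_forall_mem_Ioc_of_eventually_nhdsGT hbound).and (Ioc_mem_nhdsGT ht)).exists
  refine ⟨τ', hmem, K, hK, fun t htt => ⟨(hτ' t htt).1, fun i j => ?_⟩⟩
  rw [← hdd htt.1, ← div_eq_mul_inv, ← Real.norm_eq_abs,
    ← Real.norm_of_nonneg (mul_pos (hdpos htt.1 i) (hdpos htt.1 j)).le]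
  exact (hτ' t htt).2 i j

end Gram

section ERegular

variable {n : ℕ} {t0 τ : ℝ} {ε : Fin n → ℝ → ℝ} {E : Fin n → ℝ}

theorem PsiE_eq_intervalGram (t : ℝ) :
    PsiE n t0 ε t = intervalGram (fun j s => cvec n t0 ε s j) t0 t :=
  rfl

theorem stronglyMeasurableAtFilter_cvec (hreg : ERegular n t0 τ ε E) (l : Filter ℝ) (j : Fin n) :
    StronglyMeasurableAtFilter (fun s => cvec n t0 ε s j) l :=
  ((hreg.1 j).mul (by fun_prop)).stronglyMeasurable.stronglyMeasurableAtFilter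

theorem tendsto_cvec_div_rpow (hreg : ERegular n t0 τ ε E) (j : Fin n) :
    Tendsto (fun s => cvec n t0 ε s j / (s - t0) ^ (j : ℝ)) (𝓝[>] t0) (𝓝 (E j)) := by
  refine (hreg.2.2 j).congr' ?_
  filter_upwards [self_mem_nhdsWithin] with s hs
  rw [Real.rpow_natCast, cvec, mul_div_cancel_right₀ _ (pow_ne_zero _ (sub_pos.mpr hs).ne')]

end ERegular

theorem stmt14 (n : ℕ) (hn : 1 ≤ n) (t0 τ : ℝ) (ht : t0 < τ)
    (ε : Fin n → ℝ → ℝ) (E : Fin n → ℝ) (hreg : ERegular n t0 τ ε E)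
    (hE : ∀ j, E j ≠ 0) :
    ∃ τ' ∈ Set.Ioc t0 τ, ∃ K > (0:ℝ), ∀ t ∈ Set.Ioc t0 τ',
      IsUnit (PsiE n t0 ε t) ∧
      ∀ i j : Fin n,
        |(PsiE n t0 ε t)⁻¹ i j| ≤ K * ((t - t0) ^ ((i : ℕ) + (j : ℕ) + 1))⁻¹ := by
  have hinj : Function.Injective fun j : Fin n => (j : ℝ) :=
    Nat.cast_injective.comp Fin.val_injective
  have hexp (j : Fin n) : -1 / 2 < (j : ℝ) := by linarith [Nat.cast_nonneg (α := ℝ) (j : ℕ)]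
  simp only [PsiE_eq_intervalGram]
  exact_mod_cast stmt14_general ht hinj hexp hE (stronglyMeasurableAtFilter_cvec hreg _)
    (tendsto_cvec_div_rpow hreg)
end
end
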